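/- Let m ≥ 2 be an integer, r_m := √(2(m+1)/m), and define Φ(x) := (1/2)·√(m/(2(m+1)))·F_m(x,x) for x ∈ ℝ^{m+1}. Let (Ω, F, P) be a probability space and X : Ω → ℝ^{m+1} a random vector with ‖X‖ = r_m almost surely. Then for vectors y ∈ ℝ^{m+1} with ‖y‖ = r_m, the set of maximizers of y ↦ E[⟨X,y⟩²] over the sphere {y : ‖y‖ = r_m} equals the set of minimizers of y ↦ E[‖Φ(X) − Φ(y)‖²] over that sphere. -/

import Mathlib

open RealInnerProductSpace

/-- Dimension of the target of `F_{k+1}`: `dimF k = (k+1)(k+4)/2`. -/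
def dimF : ℕ → ℕ
  | 0 => 2
  | (k + 1) => dimF k + (k + 3)

/-- The recursively defined maps `F_{k+1} : ℝ^{k+2} × ℝ^{k+2} → ℝ^{(k+1)(k+4)/2}`
(indexed so that `F k` is the map called `F_{k+1}` in the paper, i.e. `F_m = F (m-1)`):
`F_1((x₁,x₂),(y₁,y₂)) = (x₁y₁ − x₂y₂, x₁y₂ + x₂y₁)` and
`F_{m+1}((x,x_{m+2}),(y,y_{m+2}))
  = (F_m(x,y), x_{m+2}y + y_{m+2}x, τ_{m+1}(⟨x,y⟩ − (m+1)x_{m+2}y_{m+2}))`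
with `τ_{m+1} = √(2/((m+1)(m+2)))`. -/
noncomputable def F : (k : ℕ) → (Fin (k + 2) → ℝ) → (Fin (k + 2) → ℝ) → (Fin (dimF k) → ℝ)
  | 0, x, y => ![x 0 * y 0 - x 1 * y 1, x 0 * y 1 + x 1 * y 0]
  | (k + 1), x, y =>
      Fin.append (m := dimF k + (k + 2)) (n := 1)
        (Fin.append
          (F k (fun i => x i.castSucc) (fun i => y i.castSucc))
          (fun i : Fin (k + 2) =>
            x (Fin.last (k + 2)) * y i.castSucc + y (Fin.last (k + 2)) * x i.castSucc))
        (fun _ : Fin 1 =>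
          Real.sqrt (2 / (((k : ℝ) + 2) * ((k : ℝ) + 3))) *
            ((∑ i : Fin (k + 2), x i.castSucc * y i.castSucc)
              - ((k : ℝ) + 2) * x (Fin.last (k + 2)) * y (Fin.last (k + 2))))

/-- The canonical identification of `Fin n → ℝ` with Euclidean space (used for norms
and inner products). -/
noncomputable def toE {n : ℕ} (v : Fin n → ℝ) : EuclideanSpace ℝ (Fin n) :=
  (EuclideanSpace.equiv (Fin n) ℝ).symm v

open MeasureTheory

/-- The isometric embedding `Φ(x) = (1/2)√(m/(2(m+1)))·F_m(x,x)` (with `m = k+2`),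
viewed as a map into Euclidean space. -/
noncomputable def Phi (k : ℕ) (v : Fin (k + 3) → ℝ) : EuclideanSpace ℝ (Fin (dimF (k + 1))) :=
  ((1 : ℝ)/2 * Real.sqrt (((k : ℝ) + 2) / (2 * ((k : ℝ) + 3)))) • toE (F (k + 1) v v)

/-- The kernel identity `⟨F(x,x),F(y,y)⟩ = 2⟨x,y⟩² - (2/n)‖x‖²‖y‖²`. -/
theorem F_kernel (k : ℕ) (x y : Fin (k + 2) → ℝ) :
    ∑ i, F k x x i * F k y y i = 2 * (∑ i, x i * y i) ^ 2
      - 2 / ((k : ℝ) + 2) * (∑ i, x i * x i) * (∑ i, y i * y i) := by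
  induction k with
  | zero =>
    have h : ∑ i, F 0 x x i * F 0 y y i = ∑ i : Fin 2, F 0 x x i * F 0 y y i := rfl
    rw [h]
    simp only [F, Fin.sum_univ_two]
    simp [Fin.sum_univ_two]
    ring
  | succ k ih =>
    have h : ∑ i, F (k + 1) x x i * F (k + 1) y y i
        = ∑ i : Fin (dimF k + (k + 2) + 1), F (k + 1) x x i * F (k + 1) y y i := rfl
    have hx := ih (fun i => x i.castSucc) (fun i => y i.castSucc)
    rw [h, Fin.sum_univ_add, Fin.sum_univ_add]
    simp only [F, Fin.append_left, Fin.append_right, Fin.sum_univ_one]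
    rw [hx, Fin.sum_univ_castSucc (n := k + 2), Fin.sum_univ_castSucc (n := k + 2),
      Fin.sum_univ_castSucc (n := k + 2)]
    have h2 : ∑ i : Fin (k + 2), (x (Fin.last (k + 2)) * x i.castSucc
          + x (Fin.last (k + 2)) * x i.castSucc) * (y (Fin.last (k + 2)) * y i.castSucc
          + y (Fin.last (k + 2)) * y i.castSucc)
        = 4 * x (Fin.last (k + 2)) * y (Fin.last (k + 2))
          * ∑ i : Fin (k + 2), x i.castSucc * y i.castSucc := by
      rw [Finset.mul_sum]
      exact Finset.sum_congr rfl fun i _ => by ring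
    rw [h2]
    have hk : (0 : ℝ) < (k : ℝ) + 2 := by positivity
    have hk3 : (0 : ℝ) < (k : ℝ) + 3 := by positivity
    have hs : Real.sqrt (2 / (((k : ℝ) + 2) * ((k : ℝ) + 3)))
        * Real.sqrt (2 / (((k : ℝ) + 2) * ((k : ℝ) + 3)))
        = 2 / (((k : ℝ) + 2) * ((k : ℝ) + 3)) := Real.mul_self_sqrt (by positivity)
    rw [mul_mul_mul_comm, hs]
    generalize (∑ i : Fin (k + 2), x i.castSucc * y i.castSucc) = s
    generalize (∑ i : Fin (k + 2), x i.castSucc * x i.castSucc) = A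
    generalize (∑ i : Fin (k + 2), y i.castSucc * y i.castSucc) = B
    generalize x (Fin.last (k + 2)) = a
    generalize y (Fin.last (k + 2)) = b
    have e : ((k + 1 : ℕ) : ℝ) + 2 = (k : ℝ) + 3 := by push_cast; ring
    rw [e]
    field_simp
    ring

theorem inner_toE {n : ℕ} (x y : Fin n → ℝ) : ⟪toE x, toE y⟫ = ∑ i, x i * y i := by
  simp [toE, PiLp.inner_apply, mul_comm]

theorem inner_F (k : ℕ) (x y : Fin (k + 2) → ℝ) :
    ⟪toE (F k x x), toE (F k y y)⟫ = 2 * ⟪toE x, toE y⟫ ^ 2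
      - 2 / ((k : ℝ) + 2) * ‖toE x‖ ^ 2 * ‖toE y‖ ^ 2 := by
  rw [← real_inner_self_eq_norm_sq, ← real_inner_self_eq_norm_sq]
  simp only [inner_toE]
  exact F_kernel k x y

theorem dist_Phi (k : ℕ) (x y : Fin (k + 3) → ℝ) (r : ℝ) (hx : ‖toE x‖ = r) (hy : ‖toE y‖ = r) :
    ‖Phi k x - Phi k y‖ ^ 2
      = ((k : ℝ) + 2) / (2 * ((k : ℝ) + 3)) * (r ^ 4 - ⟪toE x, toE y⟫ ^ 2) := by
  have hs : Real.sqrt (((k : ℝ) + 2) / (2 * ((k : ℝ) + 3))) ^ 2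
      = ((k : ℝ) + 2) / (2 * ((k : ℝ) + 3)) := Real.sq_sqrt (by positivity)
  have h1 := inner_F (k + 1) x x
  have h2 := inner_F (k + 1) y y
  have h3 := inner_F (k + 1) x y
  rw [real_inner_self_eq_norm_sq, real_inner_self_eq_norm_sq, hx] at h1
  rw [real_inner_self_eq_norm_sq, real_inner_self_eq_norm_sq, hy] at h2
  rw [hx, hy] at h3
  unfold Phi
  rw [← smul_sub, norm_smul, mul_pow, Real.norm_eq_abs, sq_abs, mul_pow, hs, norm_sub_sq_real,
    h1, h2, h3]
  ring

theorem integral_dist_Phi (k : ℕ) {Ω : Type*} [MeasureSpace Ω]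
    [IsProbabilityMeasure (volume : Measure Ω)]
    (X : Ω → (Fin (k + 3) → ℝ)) (hX_meas : Measurable X) (r : ℝ)
    (hX_norm : ∀ᵐ ω, ‖toE (X ω)‖ = r) (y : Fin (k + 3) → ℝ) (hy : ‖toE y‖ = r) :
    (∫ ω, ‖Phi k (X ω) - Phi k y‖ ^ 2)
      = ((k : ℝ) + 2) / (2 * ((k : ℝ) + 3)) * (r ^ 4 - ∫ ω, ⟪toE (X ω), toE y⟫ ^ 2) := by
  have hint : Integrable (fun ω => ⟪toE (X ω), toE y⟫ ^ 2) := by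
    refine Integrable.of_bound (C := (r * r) ^ 2) ?_ ?_
    · simp only [inner_toE]
      exact (Measurable.pow_const (Finset.measurable_sum _ fun i _ =>
        ((measurable_pi_apply i).comp hX_meas).mul_const _) 2).aestronglyMeasurable
    · filter_upwards [hX_norm] with ω hω
      rw [norm_pow]
      refine pow_le_pow_left₀ (norm_nonneg _) ?_ 2
      have := norm_inner_le_norm (𝕜 := ℝ) (toE (X ω)) (toE y)
      rwa [hω, hy] at this
  have h : (fun ω => ‖Phi k (X ω) - Phi k y‖ ^ 2) =ᵐ[volume] fun ω =>
      ((k : ℝ) + 2) / (2 * ((k : ℝ) + 3)) * (r ^ 4 - ⟪toE (X ω), toE y⟫ ^ 2) := by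
    filter_upwards [hX_norm] with ω hω
    exact dist_Phi k _ _ r hω hy
  rw [integral_congr_ae h, integral_const_mul, integral_sub (integrable_const _) hint]
  simp

/-- Let `m ≥ 2` (here `m = k+2`), `r_m = √(2(m+1)/m)`, and let `X` be a random vector in
`ℝ^{m+1}` with `‖X‖ = r_m` almost surely. Then over the sphere `{y : ‖y‖ = r_m}`, the set
of maximizers of `y ↦ E[⟨X,y⟩²]` equals the set of minimizers of `y ↦ E[‖Φ(X) − Φ(y)‖²]`. -/
theorem argmax_inner_sq_eq_argmin_embedded (k : ℕ) {Ω : Type*} [MeasureSpace Ω]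
    [IsProbabilityMeasure (volume : Measure Ω)]
    (X : Ω → (Fin (k + 3) → ℝ)) (hX_meas : Measurable X)
    (hX_norm : ∀ᵐ ω, ‖toE (X ω)‖ = Real.sqrt (2 * ((k : ℝ) + 3) / ((k : ℝ) + 2))) :
    {y : Fin (k + 3) → ℝ | ‖toE y‖ = Real.sqrt (2 * ((k : ℝ) + 3) / ((k : ℝ) + 2)) ∧
        ∀ z : Fin (k + 3) → ℝ, ‖toE z‖ = Real.sqrt (2 * ((k : ℝ) + 3) / ((k : ℝ) + 2)) →
          (∫ ω, ⟪toE (X ω), toE z⟫^2) ≤ ∫ ω, ⟪toE (X ω), toE y⟫^2}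
      = {y : Fin (k + 3) → ℝ | ‖toE y‖ = Real.sqrt (2 * ((k : ℝ) + 3) / ((k : ℝ) + 2)) ∧
          ∀ z : Fin (k + 3) → ℝ, ‖toE z‖ = Real.sqrt (2 * ((k : ℝ) + 3) / ((k : ℝ) + 2)) →
            (∫ ω, ‖Phi k (X ω) - Phi k y‖^2) ≤ ∫ ω, ‖Phi k (X ω) - Phi k z‖^2} := by
  have hc : (0 : ℝ) < ((k : ℝ) + 2) / (2 * ((k : ℝ) + 3)) := by positivity
  ext y
  simp only [Set.mem_setOf_eq]
  refine and_congr_right fun hy => forall_congr' fun z => forall_congr' fun hz => ?_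
  rw [integral_dist_Phi k X hX_meas _ hX_norm y hy, integral_dist_Phi k X hX_meas _ hX_norm z hz,
    mul_le_mul_iff_right₀ hc, sub_le_sub_iff_left]
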